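/- Let R = F[u,v,w,x,y,z] over a field F and let I be the ideal generated by the three 2×2 minors vz-wy, wx-uz, uy-vx of the matrix [[u,v,w],[x,y,z]]. Then I is a prime ideal of R, and the quotient ring R/I has Krull dimension 4. -/

import Mathlib

open MvPolynomial

/-!
The ideal `I` of `2 × 2` minors of a generic matrix `(X (i, j))` is the kernel of the Segre
parametrization `X (i, j) ↦ a i * b j`, hence prime over a domain: a monomial is sent to the
monomial recording its row and column sums, and two monomials with the same sums are congruent
modulo `I`, since a minor exchanges `X (i, l) * X (k, j)` for `X (i, j) * X (k, l)`.

For an `m × n` matrix over a Noetherian domain `R`, two strictly monotone chains of primes squeeze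
the dimension of the quotient. Making the entries outside one row and one column independent of the
parametrization, one at a time, descends from `I` in `(m - 1) * (n - 1)` steps, while
`dim R[X] = dim R + m * n`. Replacing rows by zero, one at a time, ascends from `I` in `m - 1`
steps to a prime whose quotient still maps onto a polynomial ring in `n` variables.
Both bounds are `dim R + m + n - 1`.
-/

section Exchange

variable {σ τ M : Type*} [CommMonoid M]

theorem multiset_prod_map_eq_of_exchange {x : σ × τ → M}
    (hx : ∀ i k j l, x (i, j) * x (k, l) = x (i, l) * x (k, j)) {s t : Multiset (σ × τ)}
    (hfst : s.map Prod.fst = t.map Prod.fst) (hsnd : s.map Prod.snd = t.map Prod.snd) :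
    (s.map x).prod = (t.map x).prod := by
  induction s using Multiset.induction generalizing t with
  | empty => simp_all
  | cons p s ih =>
    obtain ⟨i, j⟩ := p
    obtain ⟨⟨i', l⟩, hmem, rfl : i' = i⟩ : ∃ q ∈ t, q.1 = i := by
      rw [← Multiset.mem_map, ← hfst]
      simp
    obtain ⟨t, rfl⟩ := Multiset.exists_cons_of_mem hmem
    simp only [Multiset.map_cons, Multiset.cons_inj_right] at hfst hsnd
    obtain ⟨rfl, hsnd'⟩ | ⟨-, c, hs, ht⟩ := Multiset.cons_eq_cons.mp hsnd
    · simp [ih hfst hsnd']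
    · obtain ⟨⟨k, j'⟩, hmem, rfl : j' = j⟩ : ∃ q ∈ t, q.2 = j := by
        rw [← Multiset.mem_map, ht]
        simp
      obtain ⟨t, rfl⟩ := Multiset.exists_cons_of_mem hmem
      -- `t` begins with `(i, l), (k, j)`; exchange them for `(i, j), (k, l)` and cancel `(i, j)`.
      have hsnd' : s.map Prod.snd = ((k, l) ::ₘ t).map Prod.snd := by simp_all
      have hprod := ih (t := (k, l) ::ₘ t) (by simpa using hfst) hsnd'
      simp only [Multiset.map_cons, Multiset.prod_cons, hprod, ← mul_assoc, hx]

end Exchange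

theorem ker_le_ker_of_factorsThrough {ι κ R M N P : Type*} [Semiring R]
    [AddCommMonoid M] [Module R M] [AddCommMonoid N] [Module R N] [AddCommMonoid P] [Module R P]
    (b : Module.Basis ι R M) (c : Module.Basis κ R N) {e : ι → κ} {f : M →ₗ[R] N} {g : M →ₗ[R] P}
    (hf : ∀ i, f (b i) = c (e i)) (hg : (g ∘ b).FactorsThrough e) :
    LinearMap.ker f ≤ LinearMap.ker g := by
  have hfactor : g = c.constr ℕ (Function.extend e (g ∘ b) 0) ∘ₗ f :=
    b.ext fun i ↦ by simp [hf, hg.extend_apply]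
  rw [hfactor]
  exact LinearMap.ker_le_ker_comp _ _

theorem monomial_one_eq_prod_map_X {ι R : Type*} [CommSemiring R] (d : ι →₀ ℕ) :
    (monomial d 1 : MvPolynomial ι R) = (d.toMultiset.map X).prod := by
  rw [monomial_eq, Finsupp.toMultiset_map, Finsupp.prod_toMultiset,
    Finsupp.prod_mapDomain_index (by simp) (by simp [pow_add]), C_1, one_mul]

theorem ringKrullDim_quotient_add_one_le_of_lt {A : Type*} [CommRing A] {I J : Ideal A}
    [I.IsPrime] (h : I < J) : ringKrullDim (A ⧸ J) + 1 ≤ ringKrullDim (A ⧸ I) := by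
  obtain ⟨a, haJ, haI⟩ := SetLike.exists_of_lt h
  refine ringKrullDim_succ_le_of_surjective (Ideal.Quotient.factor h.le)
    (Ideal.Quotient.factor_surjective h.le) (r := Ideal.Quotient.mk I a) ?_ ?_
  · exact mem_nonZeroDivisors_of_ne_zero (mt Ideal.Quotient.eq_zero_iff_mem.mp haI)
  · rwa [Ideal.Quotient.factor_mk, Ideal.Quotient.eq_zero_iff_mem]

section GenericMatrix

variable (R : Type*) [CommRing R] {σ τ : Type*}

section SegreMap

/-- The `2 × 2` minor, on rows `i`, `k` and columns `j`, `l`, of the generic `σ × τ` matrix with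
entries `X (i, j)`. The indices may repeat or come in any order. -/
noncomputable def twoMinor (i k : σ) (j l : τ) : MvPolynomial (σ × τ) R :=
  X (i, j) * X (k, l) - X (i, l) * X (k, j)

theorem twoMinor_swap_rows (i k : σ) (j l : τ) : twoMinor R k i j l = -twoMinor R i k j l := by
  simp only [twoMinor]
  ring

theorem twoMinor_swap_columns (i k : σ) (j l : τ) : twoMinor R i k l j = -twoMinor R i k j l := by
  simp only [twoMinor]
  ring

variable (σ τ) in
/-- The determinantal ideal generated by all `2 × 2` minors of the generic `σ × τ` matrix. -/
noncomputable def twoMinorIdeal : Ideal (MvPolynomial (σ × τ) R) :=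
  Ideal.span {f | ∃ i k j l, twoMinor R i k j l = f}

theorem twoMinor_mem_twoMinorIdeal (i k : σ) (j l : τ) :
    twoMinor R i k j l ∈ twoMinorIdeal R σ τ :=
  Ideal.subset_span ⟨i, k, j, l, rfl⟩

theorem twoMinorIdeal_eq_span_lt [LinearOrder σ] [LinearOrder τ] :
    twoMinorIdeal R σ τ = Ideal.span {f | ∃ i k j l, i < k ∧ j < l ∧ twoMinor R i k j l = f} := by
  refine le_antisymm (Ideal.span_le.mpr ?_) (Ideal.span_mono ?_)
  · rintro _ ⟨i, k, j, l, rfl⟩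
    wlog hik : i ≤ k generalizing i k
    · rw [twoMinor_swap_rows]
      exact neg_mem (this k i (le_of_not_ge hik))
    wlog hjl : j ≤ l generalizing j l
    · rw [twoMinor_swap_columns]
      exact neg_mem (this l j (le_of_not_ge hjl))
    obtain rfl | hik := hik.eq_or_lt
    · simp [twoMinor, mul_comm]
    obtain rfl | hjl := hjl.eq_or_lt
    · simp [twoMinor]
    exact Ideal.subset_span ⟨i, k, j, l, hik, hjl, rfl⟩
  · rintro _ ⟨i, k, j, l, -, -, rfl⟩
    exact ⟨i, k, j, l, rfl⟩

/-- The Segre parametrization `X (i, j) ↦ a i * b j` of the matrices of rank at most one, where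
the variables `a i` and `b j` are indexed by the summands of `σ ⊕ τ`. -/
noncomputable def segreMap : MvPolynomial (σ × τ) R →ₐ[R] MvPolynomial (σ ⊕ τ) R :=
  aeval fun p ↦ X (Sum.inl p.1) * X (Sum.inr p.2)

/-- The row sums and column sums of an exponent matrix: the effect of `segreMap` on exponents. -/
noncomputable def marginals (d : σ × τ →₀ ℕ) : σ ⊕ τ →₀ ℕ :=
  (d.mapDomain Prod.fst).sumElim (d.mapDomain Prod.snd)

theorem segreMap_monomial_one (d : σ × τ →₀ ℕ) :
    segreMap R (monomial d 1) = monomial (marginals d) 1 := by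
  rw [segreMap, aeval_monomial, monomial_eq, marginals]
  simp [Finsupp.prod_sumElim, Finsupp.prod_mapDomain_index, pow_add, mul_pow]

theorem mk_monomial_eq_of_marginals_eq {d e : σ × τ →₀ ℕ} (h : marginals d = marginals e) :
    Ideal.Quotient.mk (twoMinorIdeal R σ τ) (monomial d 1) =
      Ideal.Quotient.mk (twoMinorIdeal R σ τ) (monomial e 1) := by
  obtain ⟨hfst, hsnd⟩ := Prod.ext_iff.mp <|
    Finsupp.sumFinsuppEquivProdFinsupp.symm.injective (a₁ := (_, _)) (a₂ := (_, _)) h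
  simp only [monomial_one_eq_prod_map_X, map_multiset_prod, Multiset.map_map]
  refine multiset_prod_map_eq_of_exchange (fun i k j l ↦ ?_) ?_ ?_
  · simp only [Function.comp_apply]
    rw [← map_mul, ← map_mul, Ideal.Quotient.mk_eq_mk_iff_sub_mem]
    exact twoMinor_mem_twoMinorIdeal R i k j l
  · rw [Finsupp.toMultiset_map, Finsupp.toMultiset_map]
    exact congrArg Finsupp.toMultiset hfst
  · rw [Finsupp.toMultiset_map, Finsupp.toMultiset_map]
    exact congrArg Finsupp.toMultiset hsnd

theorem ker_segreMap : RingHom.ker (segreMap R) = twoMinorIdeal R σ τ := by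
  refine le_antisymm (fun f hf ↦ Ideal.Quotient.eq_zero_iff_mem.mp ?_) (Ideal.span_le.mpr ?_)
  · have hker : LinearMap.ker (segreMap R).toLinearMap ≤
        LinearMap.ker (Ideal.Quotient.mkₐ R (twoMinorIdeal R σ τ)).toLinearMap :=
      ker_le_ker_of_factorsThrough (basisMonomials (σ × τ) R) (basisMonomials (σ ⊕ τ) R)
        (e := marginals) (by simp [segreMap_monomial_one])
        fun d e h ↦ by simpa using mk_monomial_eq_of_marginals_eq R h
    exact hker hf
  · rintro _ ⟨i, k, j, l, rfl⟩
    simp only [twoMinor, segreMap, SetLike.mem_coe, RingHom.mem_ker, map_sub, map_mul, aeval_X]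
    ring

theorem isPrime_twoMinorIdeal [IsDomain R] : (twoMinorIdeal R σ τ).IsPrime :=
  ker_segreMap R (σ := σ) (τ := τ) ▸ RingHom.ker_isPrime _

end SegreMap

section LowerBound

variable (τ) in
/-- The Segre parametrization with the rows outside `S` replaced by zero. -/
noncomputable def rowSegreMap (S : Set σ) : MvPolynomial (σ × τ) R →ₐ[R] MvPolynomial (σ ⊕ τ) R :=
  aeval fun p ↦ S.indicator (fun i ↦ X (Sum.inl i)) p.1 * X (Sum.inr p.2)

theorem rowSegreMap_univ : rowSegreMap R τ (Set.univ : Set σ) = segreMap R := by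
  simp [rowSegreMap, segreMap]

theorem antitone_ker_rowSegreMap :
    Antitone fun S : Set σ ↦ RingHom.ker (rowSegreMap R τ S) := by
  intro S S' h
  let kill : MvPolynomial (σ ⊕ τ) R →ₐ[R] MvPolynomial (σ ⊕ τ) R :=
    aeval (Sum.elim (S.indicator fun i ↦ X (Sum.inl i)) fun j ↦ X (Sum.inr j))
  have hcomp : rowSegreMap R τ S = kill.comp (rowSegreMap R τ S') := by
    ext1 p
    by_cases hS : p.1 ∈ S
    · simp [kill, rowSegreMap, hS, h hS]
    · by_cases hS' : p.1 ∈ S' <;> simp [kill, rowSegreMap, hS, hS']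
  dsimp only
  rw [hcomp]
  exact fun f hf ↦ by simp [RingHom.mem_ker, RingHom.mem_ker.mp hf]

theorem ker_rowSegreMap_insert_lt [Nontrivial R] [Nonempty τ] {S : Set σ} {i : σ} (hi : i ∉ S) :
    RingHom.ker (rowSegreMap R τ (insert i S)) < RingHom.ker (rowSegreMap R τ S) := by
  refine (antitone_ker_rowSegreMap R (Set.subset_insert i S)).lt_of_not_ge fun hle ↦ ?_
  obtain ⟨j⟩ := ‹Nonempty τ›
  have hX : X (i, j) ∈ RingHom.ker (rowSegreMap R τ S) := by
    simp [rowSegreMap, RingHom.mem_ker, hi]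
  have hzero := RingHom.mem_ker.mp (hle hX)
  apply_fun eval 1 at hzero
  simp [rowSegreMap] at hzero

theorem ringKrullDim_add_natCard_le_quotient_ker_rowSegreMap_singleton [Finite τ] (i : σ) :
    ringKrullDim R + Nat.card τ ≤
      ringKrullDim (MvPolynomial (σ × τ) R ⧸ RingHom.ker (rowSegreMap R τ {i})) := by
  let row : MvPolynomial (σ × τ) R →ₐ[R] MvPolynomial τ R :=
    (aeval (Sum.elim 1 X)).comp (rowSegreMap R τ {i})
  have hker : ∀ f ∈ RingHom.ker (rowSegreMap R τ {i}), row f = 0 := fun f hf ↦ by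
    simp [row, RingHom.mem_ker.mp hf]
  have hsection : row.comp (rename (Prod.mk i)) = AlgHom.id R _ := by
    ext1 j
    simp [row, rowSegreMap]
  have hsurj : Function.Surjective row :=
    Function.RightInverse.surjective (g := rename (Prod.mk i)) (DFunLike.congr_fun hsection)
  exact (ringKrullDim_add_natCard_le_ringKrullDim_mvPolynomial τ).trans <|
    ringKrullDim_le_of_surjective (Ideal.Quotient.lift _ row.toRingHom hker)
      (Ideal.Quotient.lift_surjective_of_surjective _ _ hsurj)

theorem ringKrullDim_add_card_le_quotient_ker_rowSegreMap_insert [IsDomain R] [Finite τ]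
    [Nonempty τ] {i : σ} {S : Finset σ} (hi : i ∉ S) :
    ringKrullDim R + Nat.card τ + S.card ≤
      ringKrullDim (MvPolynomial (σ × τ) R ⧸ RingHom.ker (rowSegreMap R τ (insert i ↑S))) := by
  induction S using Finset.cons_induction with
  | empty =>
    rw [Finset.coe_empty, insert_empty_eq, Finset.card_empty, Nat.cast_zero, add_zero]
    exact ringKrullDim_add_natCard_le_quotient_ker_rowSegreMap_singleton R i
  | cons k S hk ih =>
    simp only [Finset.mem_cons, not_or] at hi
    have hprime := RingHom.ker_isPrime (rowSegreMap R τ (insert k (insert i (S : Set σ))))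
    have hlt := ker_rowSegreMap_insert_lt R (τ := τ) (S := insert i (S : Set σ)) (i := k)
      (by simp [hk, Ne.symm hi.1])
    rw [Finset.coe_cons, Set.insert_comm, Finset.card_cons, Nat.cast_add_one, ← add_assoc]
    grw [ih hi.2]
    exact ringKrullDim_quotient_add_one_le_of_lt hlt

theorem le_ringKrullDim_quotient_twoMinorIdeal [IsDomain R] [Finite σ] [Nonempty σ] [Finite τ]
    [Nonempty τ] :
    ringKrullDim R + (Nat.card σ + Nat.card τ - 1 : ℕ) ≤
      ringKrullDim (MvPolynomial (σ × τ) R ⧸ twoMinorIdeal R σ τ) := by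
  classical
  have := Fintype.ofFinite σ
  obtain ⟨i⟩ := ‹Nonempty σ›
  have hcard : Nat.card σ + Nat.card τ - 1 = Nat.card τ + (Finset.univ.erase i).card := by
    have : 0 < Nat.card σ := Nat.card_pos
    simp only [Finset.card_erase_of_mem (Finset.mem_univ i), Finset.card_univ,
      Nat.card_eq_fintype_card (α := σ)] at *
    lia
  have huniv : insert i (Finset.univ.erase i : Set σ) = Set.univ := by simp
  rw [hcard, Nat.cast_add, ← add_assoc, ← ker_segreMap, ← rowSegreMap_univ, ← huniv]
  exact ringKrullDim_add_card_le_quotient_ker_rowSegreMap_insert R (Finset.notMem_erase i _)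

end LowerBound

section UpperBound

open Classical in
/-- The Segre parametrization with the entries in `T` made independent: they are sent to fresh
variables, indexed by the second summand of `(σ ⊕ τ) ⊕ σ × τ`. -/
noncomputable def freeSegreMap (T : Set (σ × τ)) :
    MvPolynomial (σ × τ) R →ₐ[R] MvPolynomial ((σ ⊕ τ) ⊕ σ × τ) R :=
  aeval <| T.piecewise (fun p ↦ X (Sum.inr p))
    fun p ↦ X (Sum.inl (Sum.inl p.1)) * X (Sum.inl (Sum.inr p.2))

theorem ker_freeSegreMap_empty :
    RingHom.ker (freeSegreMap R (∅ : Set (σ × τ))) = twoMinorIdeal R σ τ := by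
  have hcomp : freeSegreMap R (∅ : Set (σ × τ)) = (rename Sum.inl).comp (segreMap R) := by
    ext1 p
    simp [freeSegreMap, segreMap]
  rw [hcomp, ← ker_segreMap]
  exact RingHom.ker_comp_of_injective (segreMap R).toRingHom (f := (rename Sum.inl).toRingHom)
    (rename_injective _ Sum.inl_injective)

theorem antitone_ker_freeSegreMap :
    Antitone fun T : Set (σ × τ) ↦ RingHom.ker (freeSegreMap R T) := by
  intro T T' h
  let tie : MvPolynomial ((σ ⊕ τ) ⊕ σ × τ) R →ₐ[R] MvPolynomial ((σ ⊕ τ) ⊕ σ × τ) R :=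
    aeval (Sum.elim (fun q ↦ X (Sum.inl q)) fun p ↦ freeSegreMap R T (X p))
  have hcomp : freeSegreMap R T = tie.comp (freeSegreMap R T') := by
    ext1 p
    by_cases hT' : p ∈ T'
    · simp [tie, freeSegreMap, hT']
    · simp [tie, freeSegreMap, hT', mt (@h p) hT']
  dsimp only
  rw [hcomp]
  exact fun f hf ↦ by simp [RingHom.mem_ker, RingHom.mem_ker.mp hf]

theorem ker_freeSegreMap_insert_lt [Nontrivial R] {T : Set (σ × τ)} {p : σ × τ} {i₀ : σ} {j₀ : τ}
    (hT : insert p T ⊆ {i₀}ᶜ ×ˢ {j₀}ᶜ) (hp : p ∉ T) :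
    RingHom.ker (freeSegreMap R (insert p T)) < RingHom.ker (freeSegreMap R T) := by
  refine (antitone_ker_freeSegreMap R (Set.subset_insert p T)).lt_of_not_ge fun hle ↦ ?_
  have hrow (j : τ) : (i₀, j) ∉ insert p T := fun hj ↦ (hT hj).1 rfl
  have hcol (i : σ) : (i, j₀) ∉ insert p T := fun hi ↦ (hT hi).2 rfl
  have hmem : twoMinor R i₀ p.1 j₀ p.2 ∈ RingHom.ker (freeSegreMap R T) := by
    have hrowT (j : τ) : (i₀, j) ∉ T := mt (Set.mem_insert_of_mem p) (hrow j)
    have hcolT (i : σ) : (i, j₀) ∉ T := mt (Set.mem_insert_of_mem p) (hcol i)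
    simp only [twoMinor, freeSegreMap, RingHom.mem_ker, map_sub, map_mul, aeval_X, Prod.mk.eta,
      Set.piecewise_eq_of_notMem, hrowT, hcolT, hp, not_false_eq_true]
    ring
  have hzero := RingHom.mem_ker.mp (hle hmem)
  -- At the point where `a = b = 1` and the free entries vanish, the minor takes the value `-1`.
  apply_fun eval (Sum.elim 1 0) at hzero
  simp [freeSegreMap, twoMinor, hrow, hcol] at hzero

theorem ringKrullDim_quotient_twoMinorIdeal_add_card_le [IsDomain R] {i₀ : σ} {j₀ : τ}
    {T : Finset (σ × τ)} (hT : (T : Set (σ × τ)) ⊆ {i₀}ᶜ ×ˢ {j₀}ᶜ) :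
    ringKrullDim (MvPolynomial (σ × τ) R ⧸ twoMinorIdeal R σ τ) + T.card ≤
      ringKrullDim (MvPolynomial (σ × τ) R ⧸ RingHom.ker (freeSegreMap R (T : Set (σ × τ)))) := by
  induction T using Finset.cons_induction with
  | empty =>
    rw [Finset.coe_empty, ker_freeSegreMap_empty, Finset.card_empty, Nat.cast_zero, add_zero]
  | cons p T hp ih =>
    rw [Finset.coe_cons] at hT ⊢
    have hprime := RingHom.ker_isPrime (freeSegreMap R (insert p (T : Set (σ × τ))))
    rw [Finset.card_cons, Nat.cast_add_one, ← add_assoc]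
    grw [ih ((Set.subset_insert _ _).trans hT)]
    exact ringKrullDim_quotient_add_one_le_of_lt (ker_freeSegreMap_insert_lt R hT hp)

theorem ringKrullDim_quotient_twoMinorIdeal_add_le [IsDomain R] [Finite σ] [Nonempty σ] [Finite τ]
    [Nonempty τ] :
    ringKrullDim (MvPolynomial (σ × τ) R ⧸ twoMinorIdeal R σ τ) +
      ((Nat.card σ - 1) * (Nat.card τ - 1) : ℕ) ≤ ringKrullDim (MvPolynomial (σ × τ) R) := by
  classical
  have := Fintype.ofFinite σ
  have := Fintype.ofFinite τ
  obtain ⟨i₀⟩ := ‹Nonempty σ›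
  obtain ⟨j₀⟩ := ‹Nonempty τ›
  have hcard : (({i₀}ᶜ : Finset σ) ×ˢ ({j₀}ᶜ : Finset τ)).card =
      (Nat.card σ - 1) * (Nat.card τ - 1) := by
    simp [Finset.card_compl]
  rw [← hcard]
  exact (ringKrullDim_quotient_twoMinorIdeal_add_card_le R (i₀ := i₀) (j₀ := j₀) (by simp)).trans
    (ringKrullDim_quotient_le _)

end UpperBound

theorem ringKrullDim_quotient_twoMinorIdeal [IsDomain R] [IsNoetherianRing R] [Finite σ]
    [Nonempty σ] [Finite τ] [Nonempty τ] :
    ringKrullDim (MvPolynomial (σ × τ) R ⧸ twoMinorIdeal R σ τ) =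
      ringKrullDim R + (Nat.card σ + Nat.card τ - 1 : ℕ) := by
  refine le_antisymm ?_ (le_ringKrullDim_quotient_twoMinorIdeal R)
  have hcard : Nat.card (σ × τ) =
      (Nat.card σ + Nat.card τ - 1) + (Nat.card σ - 1) * (Nat.card τ - 1) := by
    obtain ⟨m, hm⟩ := Nat.exists_eq_add_of_lt (Nat.card_pos (α := σ))
    obtain ⟨n, hn⟩ := Nat.exists_eq_add_of_lt (Nat.card_pos (α := τ))
    simp only [Nat.card_prod, hm, hn, zero_add, Nat.add_sub_cancel]
    lia
  have hle := ringKrullDim_quotient_twoMinorIdeal_add_le R (σ := σ) (τ := τ)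
  rw [MvPolynomial.ringKrullDim_of_isNoetherianRing, hcard, Nat.cast_add, ← add_assoc] at hle
  exact ENat.WithBot.add_le_add_natCast_right_iff.mp hle

theorem twoMinorIdeal_two_three :
    twoMinorIdeal R (Fin 2) (Fin 3) =
      Ideal.span {twoMinor R 0 1 1 2, -twoMinor R 0 1 0 2, twoMinor R 0 1 0 1} := by
  rw [twoMinorIdeal_eq_span_lt]
  refine le_antisymm (Ideal.span_le.mpr ?_) (Ideal.span_le.mpr ?_)
  · rintro _ ⟨i, k, j, l, hik, hjl, rfl⟩
    obtain ⟨rfl, rfl⟩ : i = 0 ∧ k = 1 := by lia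
    obtain ⟨rfl, rfl⟩ | ⟨rfl, rfl⟩ | ⟨rfl, rfl⟩ :
      (j = 1 ∧ l = 2) ∨ (j = 0 ∧ l = 2) ∨ (j = 0 ∧ l = 1) := by lia
    · exact Ideal.subset_span (by simp)
    · exact neg_mem_iff.mp (Ideal.subset_span (by simp))
    · exact Ideal.subset_span (by simp)
  · rintro _ (rfl | rfl | rfl)
    · exact Ideal.subset_span ⟨0, 1, 1, 2, by decide, by decide, rfl⟩
    · exact neg_mem (Ideal.subset_span ⟨0, 1, 0, 2, by decide, by decide, rfl⟩)
    · exact Ideal.subset_span ⟨0, 1, 0, 1, by decide, by decide, rfl⟩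

theorem map_renameEquiv_twoMinorIdeal_two_three :
    (twoMinorIdeal R (Fin 2) (Fin 3)).map
        (renameEquiv R (finProdFinEquiv : Fin 2 × Fin 3 ≃ Fin 6)).toRingEquiv =
      Ideal.span {X 1 * X 5 - X 2 * X 4, X 2 * X 3 - X 0 * X 5, X 0 * X 4 - X 1 * X 3} := by
  rw [twoMinorIdeal_two_three, Ideal.map_span]
  simp [Set.image_insert_eq, twoMinor, finProdFinEquiv]

theorem determinantal_ideal_prime_dim_four_general [IsDomain R] [IsNoetherianRing R] :
    (Ideal.span {X 1 * X 5 - X 2 * X 4, X 2 * X 3 - X 0 * X 5,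
        X 0 * X 4 - X 1 * X 3} : Ideal (MvPolynomial (Fin 6) R)).IsPrime ∧
    ringKrullDim (MvPolynomial (Fin 6) R ⧸
        (Ideal.span {X 1 * X 5 - X 2 * X 4, X 2 * X 3 - X 0 * X 5,
          X 0 * X 4 - X 1 * X 3} : Ideal (MvPolynomial (Fin 6) R))) = ringKrullDim R + 4 := by
  have hprime := isPrime_twoMinorIdeal R (σ := Fin 2) (τ := Fin 3)
  rw [← map_renameEquiv_twoMinorIdeal_two_three]
  refine ⟨Ideal.map_isPrime_of_equiv _, ?_⟩
  rw [← ringKrullDim_eq_of_ringEquiv (Ideal.quotientEquiv _ _ _ rfl),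
    ringKrullDim_quotient_twoMinorIdeal]
  simp

end GenericMatrix

/-- The ideal of 2×2 minors of the generic 2×3 matrix `[[u,v,w],[x,y,z]]`, with
`u,v,w,x,y,z = X 0,…,X 5`: the determinantal ideal `I = (vz-wy, wx-uz, uy-vx)`
is prime, and the determinantal ring `R/I` has Krull dimension 4. -/
theorem determinantal_ideal_prime_dim_four (F : Type*) [Field F] :
    (Ideal.span {X 1 * X 5 - X 2 * X 4, X 2 * X 3 - X 0 * X 5,
        X 0 * X 4 - X 1 * X 3} : Ideal (MvPolynomial (Fin 6) F)).IsPrime ∧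
    ringKrullDim (MvPolynomial (Fin 6) F ⧸
        (Ideal.span {X 1 * X 5 - X 2 * X 4, X 2 * X 3 - X 0 * X 5,
          X 0 * X 4 - X 1 * X 3} : Ideal (MvPolynomial (Fin 6) F))) = 4 := by
  simpa only [ringKrullDim_eq_zero_of_field, zero_add] using
    determinantal_ideal_prime_dim_four_general F
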